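/- Let a be a positive integer, c ∈ (0, 1/3] and d ∈ (0, 1]. Let 𝒢 be a class of graphs closed under taking subgraphs such that every graph in 𝒢 that has a Hamiltonian path and order n has an induced path of order at least c·(log₂ n)^d. If a graph G in TR(𝒢, a) has a Hamiltonian path and order n, then G has an induced path of order at least c·(log₂ n)^(1/(4a + 1/d)). -/

import Mathlib

open SimpleGraph Real

/-- `G` has a (not necessarily induced) path on `n` vertices. -/
def HasPathOfOrder {V : Type*} (G : SimpleGraph V) (n : ℕ) : Prop :=
  ∃ (u v : V) (p : G.Walk u v), p.IsPath ∧ p.length + 1 = n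

/-- `G` has a Hamiltonian path. -/
def HasHamPath {V : Type*} (G : SimpleGraph V) : Prop :=
  ∃ (u v : V) (p : G.Walk u v), p.IsPath ∧ ∀ w, w ∈ p.support

/-- `G` has an induced path on at least `r` vertices (an induced subgraph isomorphic to a
path graph on `m ≥ r` vertices). -/
def HasInducedPathGE {V : Type*} (G : SimpleGraph V) (r : ℝ) : Prop :=
  ∃ m : ℕ, r ≤ (m : ℝ) ∧ Nonempty (pathGraph m ↪g G)

/-- A tree (or path) representation of `G` over the graph `T`: every vertex `v` of `G` has a
nonempty connected model `model v ⊆ V(T)`, and models of adjacent vertices intersect. -/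
structure TreeRep {V N : Type*} (G : SimpleGraph V) (T : SimpleGraph N) where
  model : V → Set N
  model_connected : ∀ v, (T.induce (model v)).Connected
  adj_meet : ∀ ⦃u v⦄, G.Adj u v → (model u ∩ model v).Nonempty

namespace TreeRep

variable {V N : Type*} {G : SimpleGraph V} {T : SimpleGraph N}

/-- The bag of the representation at a node `t`. -/
def bag (R : TreeRep G T) (t : N) : Set V := {v | t ∈ R.model v}

/-- The representation has width less than `k`, i.e. all bags have at most `k` vertices. -/
def WidthLT (R : TreeRep G T) (k : ℕ) : Prop := ∀ t, (R.bag t).ncard ≤ k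

/-- The representation has width at most `k`, i.e. all bags have at most `k + 1` vertices. -/
def WidthLE (R : TreeRep G T) (k : ℕ) : Prop := ∀ t, (R.bag t).ncard ≤ k + 1

/-- The weight of a path `p` of `T`: the number of vertices of `G` whose model meets `p`. -/
noncomputable def pathWeight (R : TreeRep G T) {x y : N} (p : T.Walk x y) : ℕ :=
  {v : V | ∃ t ∈ p.support, t ∈ R.model v}.ncard

/-- A representation is varied if no bag is contained in the bag at a neighboring node. -/
def Varied (R : TreeRep G T) : Prop := ∀ ⦃t t'⦄, T.Adj t t' → ¬ R.bag t ⊆ R.bag t'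

/-- The representation has adhesion less than `a`: the adhesion set of every edge of `T`
has fewer than `a` vertices. -/
def AdhesionLT (R : TreeRep G T) (a : ℕ) : Prop :=
  ∀ ⦃t t'⦄, T.Adj t t' → (R.bag t ∩ R.bag t').ncard < a

/-- The torso of the representation at a node `t`: the subgraph induced on the bag at `t`
together with all edges inside adhesion sets of edges of `T` incident to `t`. -/
def torso (R : TreeRep G T) (t : N) : SimpleGraph (R.bag t) :=
  SimpleGraph.fromRel (fun u v =>
    G.Adj u v ∨ ∃ t', T.Adj t t' ∧ (u : V) ∈ R.bag t' ∧ (v : V) ∈ R.bag t')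

end TreeRep

/-- `G` has pathwidth less than `k`: it has a representation over a path all of whose bags
have at most `k` vertices. -/
def PathwidthLT {V : Type*} (G : SimpleGraph V) (k : ℕ) : Prop :=
  ∃ (m : ℕ) (R : TreeRep G (pathGraph (m + 1))), R.WidthLT k

/-- `G` has treewidth less than `k`: it has a representation over a tree all of whose bags
have at most `k` vertices. -/
def TreewidthLT {V : Type*} (G : SimpleGraph V) (k : ℕ) : Prop :=
  ∃ (N : Type) (_ : Fintype N) (T : SimpleGraph N), T.IsTree ∧
    ∃ R : TreeRep G T, R.WidthLT k

/-- `G` has treewidth at most `k`. -/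
def TreewidthLE {V : Type*} (G : SimpleGraph V) (k : ℕ) : Prop :=
  ∃ (N : Type) (_ : Fintype N) (T : SimpleGraph N), T.IsTree ∧
    ∃ R : TreeRep G T, R.WidthLE k

/-- A leaf of a graph: a vertex with at most one neighbor. -/
def IsLeafNode {N : Type*} (T : SimpleGraph N) (l : N) : Prop :=
  (T.neighborSet l).Subsingleton

/-- `H` is obtained from `G` by a sequence of edge contractions: there is a surjection
from `V(G)` onto `V(H)` with connected fibers inducing the adjacency of `H`. -/
def IsContraction {W V : Type*} (H : SimpleGraph W) (G : SimpleGraph V) : Prop :=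
  ∃ f : V → W, Function.Surjective f ∧
    (∀ w : W, (G.induce (f ⁻¹' {w})).Connected) ∧
    (∀ x y : W, H.Adj x y ↔ x ≠ y ∧ ∃ u v : V, f u = x ∧ f v = y ∧ G.Adj u v)

/-- `G` is an interval graph: the intersection graph of a family of real intervals. -/
def IsIntervalGraph {V : Type*} (G : SimpleGraph V) : Prop :=
  ∃ l r : V → ℝ, (∀ v, l v ≤ r v) ∧
    ∀ u v : V, G.Adj u v ↔ u ≠ v ∧ max (l u) (l v) ≤ min (r u) (r v)

/-- The internal vertices of a walk: vertices of the walk distinct from its two endpoints. -/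
def WalkInternal {V : Type*} {G : SimpleGraph V} {x y : V} (p : G.Walk x y) : Set V :=
  {w | w ∈ p.support ∧ w ≠ x ∧ w ≠ y}

/-- `H` is a topological minor of `G`: there are branch vertices `φ u` for `u ∈ V(H)` and
internally disjoint paths of `G` joining them, one for each edge of `H`. -/
def IsTopMinor {W V : Type*} (H : SimpleGraph W) (G : SimpleGraph V) : Prop :=
  ∃ (φ : W ↪ V) (P : ∀ ⦃u v : W⦄, H.Adj u v → G.Walk (φ u) (φ v)),
    (∀ ⦃u v⦄ (h : H.Adj u v), (P h).IsPath) ∧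
    (∀ ⦃u v⦄ (h : H.Adj u v), P h.symm = (P h).reverse) ∧
    (∀ ⦃u v⦄ (h : H.Adj u v), ∀ w ∈ WalkInternal (P h), w ∉ Set.range φ) ∧
    (∀ ⦃u v u' v'⦄ (h : H.Adj u v) (h' : H.Adj u' v'), s(u, v) ≠ s(u', v') →
      ∀ w ∈ WalkInternal (P h), w ∉ WalkInternal (P h'))

/-- `H` is (an isomorphic copy of) a subgraph of `G`. -/
def ContainsSubgraphCopy {A B : Type*} (H : SimpleGraph A) (G : SimpleGraph B) : Prop :=
  ∃ f : A ↪ B, ∀ u v : A, H.Adj u v → G.Adj (f u) (f v)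

/-- `G` is `k`-degenerate: every (induced) subgraph has a vertex of degree at most `k`. -/
def Degenerate {V : Type*} (G : SimpleGraph V) (k : ℕ) : Prop :=
  ∀ s : Set V, s.Nonempty → ∃ v ∈ s, {w | w ∈ s ∧ G.Adj v w}.ncard ≤ k

/-- The cycle on `ZMod m` (for `m ≥ 3` this is the cycle graph on `m` vertices). -/
def ringGraph (m : ℕ) : SimpleGraph (ZMod m) :=
  SimpleGraph.fromRel (fun i j => j = i + 1)

/-- Cliquewidth expressions with labels in `Fin k`. -/
inductive CWExpr (k : ℕ) where
  | vertex (l : Fin k) : CWExpr k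
  | union (e₁ e₂ : CWExpr k) : CWExpr k
  | addEdges (i j : Fin k) (hij : i ≠ j) (e : CWExpr k) : CWExpr k
  | relabel (f : Fin k → Fin k) (e : CWExpr k) : CWExpr k

namespace CWExpr

variable {k : ℕ}

/-- The vertex set of the graph described by a cliquewidth expression. -/
def verts : CWExpr k → Type
  | vertex _ => Unit
  | union e₁ e₂ => e₁.verts ⊕ e₂.verts
  | addEdges _ _ _ e => e.verts
  | relabel _ e => e.verts

/-- The labelling of the vertices described by a cliquewidth expression. -/
def label : (e : CWExpr k) → e.verts → Fin k
  | vertex l, _ => l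
  | union e₁ _, Sum.inl x => e₁.label x
  | union _ e₂, Sum.inr x => e₂.label x
  | addEdges _ _ _ e, x => e.label x
  | relabel f e, x => f (e.label x)

/-- The adjacency relation described by a cliquewidth expression. -/
def adj : (e : CWExpr k) → e.verts → e.verts → Prop
  | vertex _, _, _ => False
  | union e₁ _, Sum.inl x, Sum.inl y => e₁.adj x y
  | union _ e₂, Sum.inr x, Sum.inr y => e₂.adj x y
  | union _ _, _, _ => False
  | addEdges i j _ e, x, y =>
      e.adj x y ∨ (e.label x = i ∧ e.label y = j) ∨ (e.label x = j ∧ e.label y = i)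
  | relabel _ e, x, y => e.adj x y

/-- The graph described by a cliquewidth expression. -/
def graph (e : CWExpr k) : SimpleGraph e.verts := SimpleGraph.fromRel e.adj

end CWExpr

/-- `G` has cliquewidth at most `k`: it is isomorphic to the graph of a cliquewidth
expression with at most `k` labels. -/
def CliquewidthLE {V : Type*} (G : SimpleGraph V) (k : ℕ) : Prop :=
  ∃ e : CWExpr k, Nonempty (G ≃g e.graph)

/-- `G` has `(k, Δ)`-almost bounded degree: removing at most `k` vertices yields a graph of
maximum degree at most `Δ`. -/
def AlmostBoundedDegree {V : Type*} (G : SimpleGraph V) (k Δ : ℕ) : Prop :=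
  ∃ X : Set V, X.ncard ≤ k ∧ ∀ v ∉ X, {w | w ∉ X ∧ G.Adj v w}.ncard ≤ Δ

/-- An embedding scheme for `H`: a rotation system (a permutation of the darts that is,
around each vertex, a single cycle on the darts leaving that vertex) together with a
signature on the edges. -/
structure EmbScheme {W : Type*} (H : SimpleGraph W) where
  rot : Equiv.Perm H.Dart
  rot_fst : ∀ d : H.Dart, (rot d).fst = d.fst
  rot_cyclic : ∀ d d' : H.Dart, d.fst = d'.fst → ∃ n : ℕ, (rot ^ n) d = d'
  sign : Sym2 W → Bool

namespace EmbScheme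

variable {W : Type*} {H : SimpleGraph W}

/-- The face-tracing step of an embedding scheme, acting on darts with a direction. -/
def faceStep (S : EmbScheme H) : H.Dart × Bool → H.Dart × Bool :=
  fun p =>
    let s' := xor p.2 (S.sign p.1.edge)
    ((if s' then S.rot.symm p.1.symm else S.rot p.1.symm), s')

/-- The number of orbits of a function. -/
noncomputable def orbitCount {α : Type*} (f : α → α) : ℕ :=
  Nat.card (Quotient (Relation.EqvGen.setoid (fun x y => f x = y)))

/-- The scheme describes an embedding of `H` in a surface of Euler genus at most `g`.
Isolated vertices each bound one face; every other face is traced twice by `faceStep`,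
so the number of faces is `orbitCount (faceStep) / 2` plus the number of isolated
vertices, and the Euler genus of the embedding is `2c - |V| + |E| - F`. -/
def GenusLE (S : EmbScheme H) (g : ℕ) : Prop :=
  2 * Nat.card H.ConnectedComponent + Nat.card H.edgeSet ≤
    g + Nat.card W +
      (orbitCount S.faceStep / 2 + Nat.card {v : W | ∀ w, ¬ H.Adj v w})

/-- The cycle `e 0, e 1, …, e (m-1)` is a facial cycle of the embedding scheme `S`:
its consecutive darts are consecutive in a face traversal. -/
def IsFacialCycle (S : EmbScheme H) {m : ℕ} (e : ZMod m → W)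
    (hadj : ∀ x : ZMod m, H.Adj (e x) (e (x + 1))) : Prop :=
  ∃ b : ZMod m → Bool, ∀ x : ZMod m,
    S.faceStep (⟨(e x, e (x + 1)), hadj x⟩, b x) =
      (⟨(e (x + 1), e (x + 1 + 1)), hadj (x + 1)⟩, b (x + 1))

end EmbScheme

/-- `Hs` has a `C`-vortex of width less than `k`, where `C` is the cycle of `G₀` given by
`e`: the vertices common to `Hs` and `G₀` are exactly those of `C`, and `Hs` has a cycle
representation over `C` in which the model of each vertex of `C` contains that vertex and
every bag has at most `k` vertices. -/
def IsVortex {V : Type*} {G : SimpleGraph V} (Hs G₀ : G.Subgraph) {m : ℕ}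
    (e : ZMod m → G₀.verts) (k : ℕ) : Prop :=
  Hs.verts ∩ G₀.verts = Subtype.val '' Set.range e ∧
  ∃ model : Hs.verts → Set (ZMod m),
    (∀ v, ((ringGraph m).induce (model v)).Connected) ∧
    (∀ (x : ZMod m) (v : Hs.verts), (e x : V) = (v : V) → x ∈ model v) ∧
    (∀ ⦃u v⦄, Hs.coe.Adj u v → (model u ∩ model v).Nonempty) ∧
    (∀ t : ZMod m, {v : Hs.verts | t ∈ model v}.ncard ≤ k)

/-- `G` is `(g, p, a, k)`-almost-embeddable. -/
def AlmostEmbeddable {V : Type*} (G : SimpleGraph V) (g p a k : ℕ) : Prop :=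
  ∃ A : Set V, A.ncard ≤ a ∧
  ∃ s : ℕ, s ≤ p ∧
  ∃ (G₀ : G.Subgraph) (Gv : Fin s → G.Subgraph),
    (G₀ ⊔ ⨆ i, Gv i) = (⊤ : G.Subgraph).deleteVerts A ∧
    (∀ i j, i ≠ j → Disjoint (Gv i).verts (Gv j).verts) ∧
    ∃ S : EmbScheme G₀.coe, S.GenusLE g ∧
    ∃ (m : Fin s → ℕ) (e : ∀ i, ZMod (m i) → G₀.verts)
      (hadj : ∀ i x, G₀.coe.Adj (e i x) (e i (x + 1))),
      (∀ i, 3 ≤ m i) ∧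
      (∀ i, Function.Injective (e i)) ∧
      (∀ i, S.IsFacialCycle (e i) (hadj i)) ∧
      (∀ i j, i ≠ j → Disjoint (Set.range (e i)) (Set.range (e j))) ∧
      (∀ i, IsVortex (Gv i) G₀ (e i) k)

/-!
Let `K` be the largest order of an induced path of `G`, and write `K / c = x`. Skipping the
vertices outside a bag turns a Hamiltonian path of `G` into one of the torso, and an induced path
of the torso expands to one of `G` that is at least as long. Hence the hypothesis on `𝒢` bounds
the size of every bag by `B = 2 ^ x ^ (1 / d)`.

Root the tree. If the Hamiltonian path has order at least `(B + 1) ^ L`, then it can be shortened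
`L` times to a subpath avoiding the bag that is nearest to the root among the bags met by the
current path, because deleting at most `B` vertices leaves a long piece. Let `A s` be the adhesion
set above the bag `t s` used at stage `s`. An induced path running inside the `i`-th subpath from
the bag `t i` to the last bag meets `A s` for all `s > i`, so one of its at most `K` vertices lies
in many of these sets; that vertex is absent from later subpaths. Repeating this `a - 1` times
exhausts the adhesion sets and gives `L < (2 * K + 1) ^ (a - 1)`. Altogether
`log n ≤ (2 * K + 1) ^ (a - 1) * log (B + 1) ≤ x ^ (a + 1 / d)`.
-/

section InducedPath

variable {V : Type*} {G : SimpleGraph V}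

lemma exists_walk_support_subset_of_preconnected {s : Set V} (hs : (G.induce s).Preconnected)
    {x y : V} (hx : x ∈ s) (hy : y ∈ s) : ∃ w : G.Walk x y, ∀ z ∈ w.support, z ∈ s := by
  obtain ⟨q⟩ := hs ⟨x, hx⟩ ⟨y, hy⟩
  let f : G.induce s →g G := (Embedding.induce s).toHom
  refine ⟨q.map f, fun z hz ↦ ?_⟩
  obtain ⟨z, -, rfl⟩ := List.mem_map.mp (Walk.support_map f q ▸ hz)
  exact z.2

lemma dist_getVert_of_length_eq_dist {u v : V} {p : G.Walk u v} (hp : p.length = G.dist u v)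
    {i j : ℕ} (hij : i ≤ j) (hj : j ≤ p.length) :
    G.dist (p.getVert i) (p.getVert j) = j - i := by
  have hdist := length_eq_dist_of_subwalk hp
    (((p.drop i).isSubwalk_take (j - i)).trans (p.isSubwalk_drop i))
  have hvert : (p.drop i).getVert (j - i) = p.getVert j := by
    rw [Walk.drop_getVert, Nat.add_sub_cancel' hij]
  rw [← hvert, ← hdist, Walk.take_length, Walk.drop_length]
  omega

lemma nonempty_pathGraph_embedding_of_length_eq_dist {u v : V} {p : G.Walk u v}
    (hp : p.length = G.dist u v) : Nonempty (pathGraph (p.length + 1) ↪g G) := by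
  have hdist (i j : Fin (p.length + 1)) (hij : i ≤ j) :
      G.dist (p.getVert i) (p.getVert j) = j - i :=
    dist_getVert_of_length_eq_dist hp hij (Nat.lt_succ_iff.mp j.isLt)
  have hreach (i j : Fin (p.length + 1)) : G.Reachable (p.getVert i) (p.getVert j) :=
    (p.take i).reachable.symm.trans (p.take j).reachable
  refine ⟨⟨⟨fun i ↦ p.getVert i, fun i j hij ↦ ?_⟩, fun {i j} ↦ ?_⟩⟩
  · have h0 := (hreach i j).dist_eq_zero_iff.mpr hij
    rcases le_total i j with h | h
    · rw [hdist i j h] at h0; omega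
    · rw [dist_comm, hdist j i h] at h0; omega
  · change G.Adj (p.getVert i) (p.getVert j) ↔ _
    rw [← dist_eq_one_iff_adj, pathGraph_adj]
    rcases le_total i j with h | h
    · rw [hdist i j h]; omega
    · rw [dist_comm, hdist j i h]; omega

lemma exists_isPath_support_subset_nonempty_pathGraph_embedding {u v : V} (w : G.Walk u v) :
    ∃ p : G.Walk u v, p.IsPath ∧ p.support ⊆ w.support ∧
      Nonempty (pathGraph (p.length + 1) ↪g G) := by
  let s : Set V := {x | x ∈ w.support}
  let f : G.induce s ↪g G := Embedding.induce s
  obtain ⟨q, hq⟩ := (w.induce s fun _ ↦ id).reachable.exists_walk_length_eq_dist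
  obtain ⟨p, hpath, hsupp, hlen⟩ : ∃ p : G.Walk u v,
      p.IsPath ∧ p.support ⊆ w.support ∧ p.length = q.length := by
    refine ⟨q.map f.toHom, Walk.IsPath.map f.injective
      (q.isPath_of_length_eq_dist hq), fun x hx ↦ ?_, Walk.length_map _ _⟩
    obtain ⟨y, -, rfl⟩ := List.mem_map.mp (Walk.support_map f.toHom q ▸ hx)
    exact y.2
  refine ⟨p, hpath, hsupp, ?_⟩
  rw [hlen]
  exact (nonempty_pathGraph_embedding_of_length_eq_dist hq).map fun e ↦ e.trans f

end InducedPath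

section SetTorso

variable {V : Type*} {G : SimpleGraph V} {β : Set V}

/-- The torso of a set `β` of vertices of `G`: two vertices of `β` are adjacent when some walk of
`G` joins them without meeting `β` in between. A representation-free counterpart of
`TreeRep.torso`, of which it is a spanning subgraph when `β` is a bag. -/
def setTorso (G : SimpleGraph V) (β : Set V) : SimpleGraph β where
  Adj u v := u ≠ v ∧ ∃ w : G.Walk u v, ∀ z ∈ w.support, z ∈ β → z = u ∨ z = v
  symm := ⟨fun _ _ ⟨hne, w, hw⟩ ↦ ⟨hne.symm, w.reverse, fun z hz hzβ ↦
    (hw z (by simpa using hz) hzβ).symm⟩⟩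
  loopless := ⟨fun _ h ↦ h.1 rfl⟩

open Classical in
lemma exists_setTorso_walk_of_isPath {u v : V} {w : G.Walk u v} (hw : w.IsPath)
    (hβ : ∃ z ∈ w.support, z ∈ β) :
    ∃ (x y : β) (w₁ : G.Walk u x) (w' : (setTorso G β).Walk x y),
      w'.support.map Subtype.val = w.support.filter (· ∈ β) ∧
      (∀ z ∈ w₁.support, z ∈ β → z = x) ∧ (v ∈ β → y = v) := by
  induction w with
  | @nil u =>
    have hu : u ∈ β := by simpa using hβ
    exact ⟨⟨u, hu⟩, ⟨u, hu⟩, .nil, .nil, by simp [hu], by simp, fun _ ↦ rfl⟩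
  | @cons u u' v h p ih =>
    obtain ⟨hp, hup⟩ := (Walk.cons_isPath_iff h p).mp hw
    by_cases hpβ : ∃ z ∈ p.support, z ∈ β
    · obtain ⟨x, y, w₁, w', hsupp, hw₁, hy⟩ := ih hp hpβ
      by_cases hu : u ∈ β
      · have hx : (x : V) ∈ p.support :=
          List.mem_of_mem_filter (hsupp ▸ List.mem_map_of_mem w'.start_mem_support)
        have hadj : (setTorso G β).Adj ⟨u, hu⟩ x := by
          refine ⟨fun h ↦ hup (by rwa [← h] at hx), .cons h w₁, fun z hz hzβ ↦ ?_⟩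
          exact (List.mem_cons.mp hz).imp_right fun hz ↦ hw₁ z hz hzβ
        exact ⟨⟨u, hu⟩, y, .nil, .cons hadj w', by simp [hsupp, hu], by simp, hy⟩
      · refine ⟨x, y, .cons h w₁, w', by simp [hsupp, hu], fun z hz hzβ ↦ ?_, hy⟩
        rcases List.mem_cons.mp hz with rfl | hz
        exacts [absurd hzβ hu, hw₁ z hz hzβ]
    · push Not at hpβ
      have hu : u ∈ β := by
        obtain ⟨z, hz, hzβ⟩ := hβ
        rcases List.mem_cons.mp hz with rfl | hz
        exacts [hzβ, absurd hzβ (hpβ z hz)]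
      have hfilter : p.support.filter (· ∈ β) = [] := by simpa using hpβ
      exact ⟨⟨u, hu⟩, ⟨u, hu⟩, .nil, .nil, by simp [hu, hfilter], by simp,
        fun hv ↦ absurd hv (hpβ v p.end_mem_support)⟩

lemma HasHamPath.setTorso (hG : HasHamPath G) (hβ : β.Nonempty) :
    HasHamPath (setTorso G β) := by
  classical
  obtain ⟨u, v, w, hw, hham⟩ := hG
  obtain ⟨x, y, -, w', hsupp, -, -⟩ :=
    exists_setTorso_walk_of_isPath hw (hβ.imp fun z hz ↦ ⟨hham z, hz⟩)
  refine ⟨x, y, w', ?_, fun z ↦ ?_⟩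
  · refine (Walk.isPath_def _).mpr (List.Nodup.of_map Subtype.val ?_)
    exact hsupp ▸ hw.support_nodup.filter _
  · rw [← List.mem_map_of_injective Subtype.val_injective, hsupp]
    simp [hham]

lemma exists_walk_of_setTorso_walk {x y : β} (p : (setTorso G β).Walk x y) :
    ∃ w : G.Walk x y, ∀ z : β, ↑z ∈ w.support → z ∈ p.support := by
  induction p with
  | nil => exact ⟨.nil, fun z hz ↦ by simpa [Subtype.ext_iff] using hz⟩
  | @cons x x' y h p ih =>
    obtain ⟨w, hw⟩ := ih
    obtain ⟨w₀, hw₀⟩ := h.2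
    refine ⟨w₀.append w, fun z hz ↦ ?_⟩
    rw [Walk.support_cons, List.mem_cons]
    rcases (Walk.mem_support_append_iff _ _).mp hz with hz | hz
    · rcases hw₀ z hz z.2 with hz | hz
      · exact .inl (Subtype.ext hz)
      · exact .inr (Subtype.ext hz ▸ p.start_mem_support)
    · exact .inr (hw z hz)

lemma le_add_length_of_support_subset_range {W : Type*} {H : SimpleGraph W} {m : ℕ}
    (f : pathGraph m ↪g H) {x y : W} (w : H.Walk x y) (hw : ∀ z ∈ w.support, z ∈ Set.range f)
    {i j : Fin m} (hi : f i = x) (hj : f j = y) : (j : ℕ) ≤ i + w.length := by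
  induction w generalizing i with
  | nil => simp [f.injective (hj.trans hi.symm)]
  | @cons x x' y h p ih =>
    obtain ⟨i', hi'⟩ := hw x' (by simp)
    have hstep := ih (fun z hz ↦ hw z (by simp [hz])) hi' hj
    have hadj := pathGraph_adj.mp (f.map_adj_iff.mp (by rwa [hi, hi'] : H.Adj (f i) (f i')))
    rw [Walk.length_cons]
    omega

lemma exists_le_nonempty_pathGraph_embedding_of_setTorso {m : ℕ}
    (f : pathGraph m ↪g setTorso G β) : ∃ m' ≥ m, Nonempty (pathGraph m' ↪g G) := by
  classical
  rcases m with _ | k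
  · exact ⟨0, le_rfl, ⟨RelEmbedding.ofIsEmpty _ _⟩⟩
  obtain ⟨p⟩ := pathGraph_preconnected (k + 1) 0 (Fin.last k)
  obtain ⟨w, hw⟩ := exists_walk_of_setTorso_walk (p.map f.toHom)
  obtain ⟨q, hq, hqw, hind⟩ := exists_isPath_support_subset_nonempty_pathGraph_embedding w
  obtain ⟨x, y, w₁, w', hsupp, hx, hy⟩ :=
    exists_setTorso_walk_of_isPath hq ⟨_, q.start_mem_support, (f 0).2⟩
  have hrange : ∀ z ∈ w'.support, z ∈ Set.range f := fun z hz ↦ by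
    have hzq := List.mem_of_mem_filter (hsupp ▸ List.mem_map_of_mem hz)
    obtain ⟨i, -, hi⟩ := List.mem_map.mp (Walk.support_map f.toHom p ▸ hw z (hqw hzq))
    exact ⟨i, hi⟩
  have hlength : w'.length ≤ q.length := by
    have := congrArg List.length hsupp ▸ List.length_filter_le _ q.support
    simpa using this
  have hclimb := le_add_length_of_support_subset_range f w' hrange
    (Subtype.ext (hx _ w₁.start_mem_support (f 0).2)) (Subtype.ext (hy (f (Fin.last k)).2)).symm
  refine ⟨_, ?_, hind⟩
  simp only [Fin.val_last, Fin.val_zero] at hclimb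
  omega

end SetTorso

section Tree

variable {N : Type*} {T : SimpleGraph N} {t t' : N}

lemma mem_and_mem_of_not_reachable_deleteEdges {s : Set N} (hs : (T.induce s).Preconnected)
    {x y : N} (hx : x ∈ s) (hy : y ∈ s) (h : ¬ (T.deleteEdges {s(t, t')}).Reachable x y) :
    t ∈ s ∧ t' ∈ s := by
  obtain ⟨w, hw⟩ := exists_walk_support_subset_of_preconnected hs hx hy
  have hedge := w.mem_edges_of_not_reachable_deleteEdges h
  exact ⟨hw t (w.fst_mem_support_of_mem_edges hedge), hw t' (w.snd_mem_support_of_mem_edges hedge)⟩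

lemma exists_adj_not_reachable_deleteEdges (hT : T.IsTree) {m : N} (hne : m ≠ t) :
    ∃ t', T.Adj t t' ∧ ¬ (T.deleteEdges {s(t, t')}).Reachable m t := by
  obtain ⟨p, hp⟩ := hT.connected.exists_isPath t m
  cases p with
  | nil => exact absurd rfl hne
  | @cons _ t' _ h p =>
    have hbridge := isBridge_iff.mp (isAcyclic_iff_forall_adj_isBridge.mp hT.isAcyclic h)
    obtain ⟨-, htp⟩ := (Walk.cons_isPath_iff h p).mp hp
    have hreach : (T.deleteEdges {s(t, t')}).Reachable t' m :=
      reachable_deleteEdges_iff_exists_walk.mpr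
        ⟨p, fun he ↦ htp (p.fst_mem_support_of_mem_edges he)⟩
    exact ⟨t', h, fun hmt ↦ hbridge (hreach.trans hmt).symm⟩

lemma dist_lt_of_mem_support_of_length_eq_dist {r x z : N} {w : T.Walk r x}
    (hw : w.length = T.dist r x) (hz : z ∈ w.support) (hzx : z ≠ x) : T.dist r z < T.dist r x := by
  classical
  calc T.dist r z ≤ (w.takeUntil z hz).length := dist_le _
    _ < w.length := w.length_takeUntil_lt_length hz hzx
    _ = T.dist r x := hw

lemma dist_lt_dist_of_not_reachable_deleteEdges (hT : T.Connected) {r x : N}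
    (h : ¬ (T.deleteEdges {s(t, t')}).Reachable r x) :
    (t ≠ x → T.dist r t < T.dist r x) ∧ (t' ≠ x → T.dist r t' < T.dist r x) := by
  obtain ⟨w, hw⟩ := hT.exists_walk_length_eq_dist r x
  have hedge := w.mem_edges_of_not_reachable_deleteEdges h
  exact ⟨dist_lt_of_mem_support_of_length_eq_dist hw (w.fst_mem_support_of_mem_edges hedge),
    dist_lt_of_mem_support_of_length_eq_dist hw (w.snd_mem_support_of_mem_edges hedge)⟩

end Tree

namespace TreeRep

variable {V N : Type*} {G : SimpleGraph V} {T : SimpleGraph N} {t t' : N}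

lemma mem_bag_and_mem_bag_of_not_reachable (R : TreeRep G T) {v : V} {x y : N}
    (hx : x ∈ R.model v) (hy : y ∈ R.model v)
    (h : ¬ (T.deleteEdges {s(t, t')}).Reachable x y) : v ∈ R.bag t ∩ R.bag t' :=
  mem_and_mem_of_not_reachable_deleteEdges (R.model_connected v).preconnected hx hy h

lemma exists_mem_support_mem_bag_inter (R : TreeRep G T) {u v : V} (w : G.Walk u v) {x y : N}
    (hx : x ∈ R.model u) (hy : y ∈ R.model v)
    (h : ¬ (T.deleteEdges {s(t, t')}).Reachable x y) :
    ∃ z ∈ w.support, z ∈ R.bag t ∩ R.bag t' := by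
  induction w generalizing x with
  | nil => exact ⟨_, by simp, R.mem_bag_and_mem_bag_of_not_reachable hx hy h⟩
  | @cons u u' v huu' w ih =>
    obtain ⟨m, hmu, hmu'⟩ := R.adj_meet huu'
    by_cases hxm : (T.deleteEdges {s(t, t')}).Reachable x m
    · obtain ⟨z, hz, hzt⟩ := ih hmu' hy fun hmy ↦ h (hxm.trans hmy)
      exact ⟨z, by simp [hz], hzt⟩
    · exact ⟨u, by simp, R.mem_bag_and_mem_bag_of_not_reachable hx hmu hxm⟩

lemma setTorso_bag_le_torso (R : TreeRep G T) (hT : T.IsTree) (t : N) :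
    setTorso G (R.bag t) ≤ R.torso t := by
  classical
  rintro ⟨u, hu⟩ ⟨v, hv⟩ ⟨hne, w, hw⟩
  suffices h : G.Adj u v ∨ ∃ t', T.Adj t t' ∧ u ∈ R.bag t' ∧ v ∈ R.bag t' from ⟨hne, .inl h⟩
  obtain ⟨p, hp, hpβ⟩ : ∃ p : G.Walk u v, p.IsPath ∧
      ∀ z ∈ p.support, z ∈ R.bag t → z = u ∨ z = v :=
    ⟨w.bypass, w.bypass_isPath, fun z hz ↦ hw z (w.support_bypass_subset_support hz)⟩
  cases p with
  | nil => exact absurd (Subtype.ext rfl) hne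
  | @cons _ x _ h q =>
    have huq : u ∉ q.support := ((Walk.cons_isPath_iff h q).mp hp).2
    by_cases hx : x ∈ R.bag t
    · rcases hpβ x (by simp) hx with rfl | rfl
      exacts [absurd h (G.irrefl), .inl h]
    · obtain ⟨m, hmu, hmx⟩ := R.adj_meet h
      obtain ⟨t', htt', hsep⟩ :=
        exists_adj_not_reachable_deleteEdges hT (t := t) (m := m) (fun hmt ↦ hx (hmt ▸ hmx))
      obtain ⟨z, hzq, hzt, hzt'⟩ := R.exists_mem_support_mem_bag_inter q hmx hv hsep
      have hut' := (R.mem_bag_and_mem_bag_of_not_reachable hmu hu hsep).2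
      rcases hpβ z (by simp [hzq]) hzt with rfl | rfl
      exacts [absurd hzq huq, .inr ⟨t', htt', hut', hzt'⟩]

lemma exists_mem_bag_forall_dist_le (R : TreeRep G T) (r : N) {s : Set V}
    (hs : s.Nonempty) :
    ∃ t, (∃ x ∈ s, x ∈ R.bag t) ∧ ∀ x ∈ s, ∀ t' ∈ R.model x, T.dist r t ≤ T.dist r t' := by
  let M : Set N := {t | ∃ x ∈ s, x ∈ R.bag t}
  have hM : M.Nonempty := by
    obtain ⟨x, hx⟩ := hs
    obtain ⟨t, ht⟩ := (R.model_connected x).nonempty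
    exact ⟨t, x, hx, ht⟩
  exact ⟨Function.argminOn (T.dist r) M hM, Function.argminOn_mem _ M hM,
    fun x hx t' ht' ↦ Function.argminOn_le _ M (⟨x, hx, ht'⟩ : t' ∈ M)⟩

end TreeRep

section Counting

variable {V : Type*} [Finite V] {P A : ℕ → Set V} {K L : ℕ}

lemma card_le_add_one_of_forall_mem {b M i : ℕ} {S : Finset ℕ} {q : V} (hP : Antitone P)
    (hdisj : ∀ j < L, Disjoint (P (j + 1)) (A j))
    (hM : ∀ i, ∀ S ⊆ Finset.Ioc i L, (∀ s ∈ S, (A s ∩ P i).ncard ≤ b) → S.card + 1 ≤ M)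
    (hS : S ⊆ Finset.Ioc i L) (hqP : q ∈ P i) (hqA : ∀ s ∈ S, q ∈ A s)
    (hA : ∀ s ∈ S, (A s ∩ P i).ncard ≤ b + 1) : S.card ≤ M + 1 := by
  rcases S.eq_empty_or_nonempty with rfl | hne
  · simp
  obtain ⟨j, hjS, hj⟩ := S.exists_min_image id hne
  have hij : i < j := (Finset.mem_Ioc.mp (hS hjS)).1
  have hS' : (S \ {j, j + 1}).card + 1 ≤ M := by
    refine hM (j + 1) _ (fun s hs ↦ ?_) fun s hs ↦ ?_ <;>
      simp only [Finset.mem_sdiff, Finset.mem_insert, Finset.mem_singleton, not_or] at hs <;>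
      obtain ⟨hsS, hsj, hsj'⟩ := hs <;> have hjs : j ≤ s := hj s hsS <;>
      have hsL := (Finset.mem_Ioc.mp (hS hsS)).2
    · exact Finset.mem_Ioc.mpr ⟨by omega, hsL⟩
    -- `q` lies in `A s ∩ P i` but no longer in `P (j + 1)`
    · refine Nat.lt_succ_iff.mp (lt_of_lt_of_le (Set.ncard_lt_ncard ⟨?_, fun h ↦ ?_⟩) (hA s hsS))
      · exact Set.inter_subset_inter_right _ (hP (by omega))
      · exact Set.disjoint_left.mp (hdisj j (by omega)) (h ⟨hqA s hsS, hqP⟩).2 (hqA j hjS)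
  have hcard := Finset.card_le_card_sdiff_add_card (s := S) (t := {j, j + 1})
  have hpair := Finset.card_le_two (a := j) (b := j + 1)
  omega

lemma card_add_one_le_pow_of_hitting (hP : Antitone P)
    (hdisj : ∀ j < L, Disjoint (P (j + 1)) (A j))
    (hhit : ∀ i, ∃ Q : Finset V, Q.card ≤ K ∧ ↑Q ⊆ P i ∧
      ∀ s ∈ Finset.Ioc i L, ∃ q ∈ Q, q ∈ A s)
    (b i : ℕ) {S : Finset ℕ} (hS : S ⊆ Finset.Ioc i L) (hA : ∀ s ∈ S, (A s ∩ P i).ncard ≤ b) :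
    S.card + 1 ≤ (2 * K + 1) ^ b := by
  classical
  induction b generalizing i S with
  | zero =>
    obtain ⟨Q, -, hQP, hQ⟩ := hhit i
    have hempty : S = ∅ := Finset.eq_empty_of_forall_notMem fun s hs ↦ by
      obtain ⟨q, hqQ, hqA⟩ := hQ s (hS hs)
      have hmem : q ∈ A s ∩ P i := ⟨hqA, hQP hqQ⟩
      simp [(Set.ncard_eq_zero (Set.toFinite _)).mp (Nat.le_zero.mp (hA s hs))] at hmem
    simp [hempty]
  | succ b ih =>
    obtain ⟨Q, hQK, hQP, hQ⟩ := hhit i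
    have hfiber : ∀ q ∈ Q, (S.filter (q ∈ A ·)).card ≤ (2 * K + 1) ^ b + 1 := fun q hq ↦
      card_le_add_one_of_forall_mem hP hdisj (fun _ _ hS hA ↦ ih _ hS hA)
        ((Finset.filter_subset _ _).trans hS) (hQP hq) (fun s hs ↦ (Finset.mem_filter.mp hs).2)
        fun s hs ↦ hA s (Finset.mem_of_mem_filter s hs)
    have hcover : S ⊆ Q.biUnion fun q ↦ S.filter (q ∈ A ·) := fun s hs ↦ by
      obtain ⟨q, hq, hqA⟩ := hQ s (hS hs)
      exact Finset.mem_biUnion.mpr ⟨q, hq, Finset.mem_filter.mpr ⟨hs, hqA⟩⟩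
    have hpow : 1 ≤ (2 * K + 1) ^ b := Nat.one_le_pow _ _ (by omega)
    calc S.card + 1 ≤ Q.card * ((2 * K + 1) ^ b + 1) + 1 :=
          Nat.add_le_add_right ((Finset.card_le_card hcover).trans
            (Finset.card_biUnion_le_card_mul _ _ _ hfiber)) 1
      _ ≤ K * (2 * (2 * K + 1) ^ b) + (2 * K + 1) ^ b := by gcongr; omega
      _ = (2 * K + 1) ^ (b + 1) := by ring

end Counting

/-- A descent of length `L` in a tree representation whose tree is rooted at `r`: a decreasing
sequence of connected vertex sets `P i` of `G` together with nodes `t i`, where `t i` is a node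
closest to the root among those in the model of some vertex of `P i`, and where `P (i + 1)` avoids
the bag at `t i`. Only the indices `i ≤ L` matter; the sequences are total for convenience. -/
structure IsDescent {V N : Type*} {G : SimpleGraph V} {T : SimpleGraph N} (R : TreeRep G T)
    (r : N) (P : ℕ → Set V) (t : ℕ → N) (L : ℕ) : Prop where
  antitone : Antitone P
  preconnected : ∀ i, (G.induce (P i)).Preconnected
  exists_mem_bag : ∀ i ≤ L, ∃ x ∈ P i, x ∈ R.bag (t i)
  dist_le : ∀ i ≤ L, ∀ x ∈ P i, ∀ s ∈ R.model x, T.dist r (t i) ≤ T.dist r s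
  disjoint_bag : ∀ i < L, Disjoint (P (i + 1)) (R.bag (t i))

namespace IsDescent

variable {V N : Type*} {G : SimpleGraph V} {T : SimpleGraph N} {R : TreeRep G T} {r : N}
  {P : ℕ → Set V} {t : ℕ → N} {L : ℕ}

lemma const {P₀ : Set V} {t₀ : N} (hconn : (G.induce P₀).Preconnected)
    (hmem : ∃ x ∈ P₀, x ∈ R.bag t₀)
    (hmin : ∀ x ∈ P₀, ∀ s ∈ R.model x, T.dist r t₀ ≤ T.dist r s) :
    IsDescent R r (fun _ ↦ P₀) (fun _ ↦ t₀) 0 where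
  antitone := antitone_const
  preconnected _ := hconn
  exists_mem_bag _ _ := hmem
  dist_le _ _ := hmin
  disjoint_bag _ hi := absurd hi (Nat.not_lt_zero _)

lemma cons (h : IsDescent R r P t L) {P₀ : Set V} {t₀ : N}
    (hconn : (G.induce P₀).Preconnected) (hmem : ∃ x ∈ P₀, x ∈ R.bag t₀)
    (hmin : ∀ x ∈ P₀, ∀ s ∈ R.model x, T.dist r t₀ ≤ T.dist r s)
    (hsub : P 0 ⊆ P₀) (hdisj : Disjoint (P 0) (R.bag t₀)) :
    IsDescent R r (fun | 0 => P₀ | i + 1 => P i) (fun | 0 => t₀ | i + 1 => t i) (L + 1) where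
  antitone := antitone_nat_of_succ_le fun
    | 0 => hsub
    | i + 1 => h.antitone i.le_succ
  preconnected
    | 0 => hconn
    | i + 1 => h.preconnected i
  exists_mem_bag
    | 0, _ => hmem
    | i + 1, hi => h.exists_mem_bag i (Nat.le_of_succ_le_succ hi)
  dist_le
    | 0, _ => hmin
    | i + 1, hi => h.dist_le i (Nat.le_of_succ_le_succ hi)
  disjoint_bag
    | 0, _ => hdisj
    | i + 1, hi => h.disjoint_bag i (Nat.lt_of_succ_lt_succ hi)

lemma dist_le_dist (h : IsDescent R r P t L) {i s : ℕ} (his : i ≤ s) (hs : s ≤ L) :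
    T.dist r (t i) ≤ T.dist r (t s) := by
  obtain ⟨x, hx, hxt⟩ := h.exists_mem_bag s hs
  exact h.dist_le i (his.trans hs) x (h.antitone his hx) _ hxt

lemma ne_of_lt (h : IsDescent R r P t L) {i s : ℕ} (his : i < s) (hs : s ≤ L) : t i ≠ t s := by
  obtain ⟨x, hx, hxt⟩ := h.exists_mem_bag s hs
  intro heq
  exact Set.disjoint_left.mp (h.disjoint_bag i (his.trans_le hs)) (h.antitone his hx) (heq ▸ hxt)

lemma root_ne (h : IsDescent R r P t L) (hT : T.Connected) {s : ℕ} (h0 : 0 < s) (hs : s ≤ L) :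
    r ≠ t s := by
  rintro rfl
  have hdist : T.dist (t s) (t 0) = 0 := by
    simpa using h.dist_le_dist (Nat.zero_le s) hs
  exact h.ne_of_lt h0 hs ((hT.dist_eq_zero_iff.mp hdist).symm)

/-- Here `p` is the parent of `t s` in the tree rooted at `r`. -/
lemma exists_adj_forall_not_reachable (h : IsDescent R r P t L) (hT : T.IsTree) {s : ℕ} (h0 : 0 < s)
    (hs : s ≤ L) : ∃ p, T.Adj (t s) p ∧ ∀ i < s,
      ¬ (T.deleteEdges {s(t s, p)}).Reachable (t i) (t L) := by
  obtain ⟨p, hp, hsep⟩ := exists_adj_not_reachable_deleteEdges hT (h.root_ne hT.connected h0 hs)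
  refine ⟨p, hp, fun i hi hreach ↦ hsep ?_⟩
  have habove : (T.deleteEdges {s(t s, p)}).Reachable r (t i) := by
    by_contra hsep'
    exact ((dist_lt_dist_of_not_reachable_deleteEdges hT.connected hsep').1
      (h.ne_of_lt hi hs).symm).not_ge (h.dist_le_dist hi.le hs)
  have hbelow : (T.deleteEdges {s(t s, p)}).Reachable (t L) (t s) := by
    by_contra hsep'
    obtain ⟨x, hx, hxt⟩ := h.exists_mem_bag L le_rfl
    obtain ⟨y, hy, hyt⟩ := h.exists_mem_bag s hs
    obtain ⟨w, hw⟩ :=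
      exists_walk_support_subset_of_preconnected (h.preconnected s) (h.antitone hs hx) hy
    obtain ⟨z, hz, -, hzp⟩ := R.exists_mem_support_mem_bag_inter w hxt hyt hsep'
    exact ((dist_lt_dist_of_not_reachable_deleteEdges hT.connected hsep).2 hp.ne').not_ge
      (h.dist_le s hs z (hw z hz) p hzp)
  exact habove.trans (hreach.trans hbelow)

lemma exists_hitting (h : IsDescent R r P t L) {K : ℕ}
    (hK : ∀ m, Nonempty (pathGraph m ↪g G) → m ≤ K) {p : ℕ → N}
    (hp : ∀ s, 0 < s → s ≤ L → ∀ i < s, ¬ (T.deleteEdges {s(t s, p s)}).Reachable (t i) (t L))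
    (i : ℕ) : ∃ Q : Finset V, Q.card ≤ K ∧ ↑Q ⊆ P i ∧
      ∀ s ∈ Finset.Ioc i L, ∃ q ∈ Q, q ∈ R.bag (t s) ∩ R.bag (p s) := by
  classical
  rcases lt_or_ge L i with hi | hi
  · exact ⟨∅, by simp, by simp, by simp [Finset.Ioc_eq_empty_of_le hi.le]⟩
  obtain ⟨x, hx, hxt⟩ := h.exists_mem_bag i hi
  obtain ⟨y, hy, hyt⟩ := h.exists_mem_bag L le_rfl
  obtain ⟨w, hw⟩ :=
    exists_walk_support_subset_of_preconnected (h.preconnected i) hx (h.antitone hi hy)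
  obtain ⟨q, -, hqw, hq⟩ := exists_isPath_support_subset_nonempty_pathGraph_embedding w
  refine ⟨q.support.toFinset, ?_, fun z hz ↦ hw z (hqw (by simpa using hz)), fun s hs ↦ ?_⟩
  · exact (List.toFinset_card_le _).trans (q.length_support ▸ hK _ hq)
  · obtain ⟨his, hsL⟩ := Finset.mem_Ioc.mp hs
    simpa using R.exists_mem_support_mem_bag_inter q hxt hyt (hp s (by omega) hsL i his)

lemma length_lt_pow [Finite V] (h : IsDescent R r P t L) (hT : T.IsTree) {b K : ℕ}
    (hR : R.AdhesionLT (b + 1)) (hK : ∀ m, Nonempty (pathGraph m ↪g G) → m ≤ K) :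
    L < (2 * K + 1) ^ b := by
  have : Nonempty N := ⟨r⟩
  choose! p hadj hsep using fun s (h0 : 0 < s) (hs : s ≤ L) ↦
    h.exists_adj_forall_not_reachable hT h0 hs
  have hcard := card_add_one_le_pow_of_hitting h.antitone
    (fun j hj ↦ (h.disjoint_bag j hj).mono_right Set.inter_subset_left)
    (h.exists_hitting hK hsep) b 0 subset_rfl fun s hs ↦ by
      obtain ⟨h0, hs⟩ := Finset.mem_Ioc.mp hs
      exact (Set.ncard_le_ncard Set.inter_subset_left).trans
        (Nat.lt_succ_iff.mp (hR (hadj s h0 hs)))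
  simpa using hcard

end IsDescent

section Length

lemma exists_infix_forall_not_length_le {α : Type*} (p : α → Bool) (l : List α) :
    ∃ l', l' <:+: l ∧ (∀ x ∈ l', ¬ p x) ∧
      l.length + 1 ≤ (l.countP p + 1) * (l'.length + 1) := by
  induction hn : l.countP p generalizing l with
  | zero => exact ⟨l, List.infix_rfl, List.countP_eq_zero.mp hn, by omega⟩
  | succ n ih =>
    obtain ⟨y, hy, hpy⟩ := List.countP_pos_iff.mp (hn.trans_gt n.succ_pos)
    obtain ⟨x, hx⟩ := Option.isSome_iff_exists.mp (List.find?_isSome.mpr ⟨y, hy, hpy⟩)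
    obtain ⟨hpx, as, bs, rfl, has⟩ := List.find?_eq_some_iff_append.mp hx
    have has' : as.countP p = 0 := List.countP_eq_zero.mpr (by simpa using has)
    obtain ⟨l', hl', hp, hlen⟩ := ih bs (by simpa [has', hpx] using hn)
    simp only [List.length_append, List.length_cons]
    rcases le_total as.length l'.length with h | h
    · refine ⟨l', hl'.trans ⟨as ++ [x], [], by simp⟩, hp, ?_⟩
      nlinarith
    · refine ⟨as, (List.prefix_append _ _).isInfix, by simpa using has, ?_⟩
      nlinarith

variable {V N : Type*} {G : SimpleGraph V} {T : SimpleGraph N}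

lemma preconnected_induce_of_isChain {l : List V} (hl : l.IsChain G.Adj) :
    (G.induce {x | x ∈ l}).Preconnected := by
  rcases eq_or_ne l [] with rfl | hne
  · exact fun x ↦ absurd x.2 List.not_mem_nil
  · exact Walk.support_ofSupport hne hl ▸
      (Walk.ofSupport l hne hl).connected_induce_support.preconnected

lemma countP_le_ncard [Finite V] {l : List V} (hl : l.Nodup) (s : Set V) [DecidablePred (· ∈ s)] :
    l.countP (· ∈ s) ≤ s.ncard := by
  classical
  rw [List.countP_eq_length_filter, ← List.toFinset_card_of_nodup (hl.filter _),
    ← Set.ncard_coe_finset]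
  exact Set.ncard_le_ncard fun x hx ↦ by
    simpa using (List.mem_filter.mp (List.mem_toFinset.mp hx)).2

lemma exists_isDescent [Finite V] (R : TreeRep G T) (r : N) {B : ℕ}
    (hB : ∀ t, (R.bag t).ncard ≤ B) (L : ℕ) {l : List V} (hchain : l.IsChain G.Adj)
    (hnodup : l.Nodup) (hlen : (B + 1) ^ L ≤ l.length) :
    ∃ P t, P 0 = {x | x ∈ l} ∧ IsDescent R r P t L := by
  classical
  induction L generalizing l with
  | zero =>
    have hne : l ≠ [] := List.length_pos_iff.mp ((Nat.pow_pos B.succ_pos).trans_le hlen)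
    obtain ⟨t₀, hmem, hmin⟩ :=
      R.exists_mem_bag_forall_dist_le r (s := {x | x ∈ l}) (List.exists_mem_of_ne_nil l hne)
    exact ⟨_, _, rfl, IsDescent.const (preconnected_induce_of_isChain hchain) hmem hmin⟩
  | succ L ih =>
    have hne : l ≠ [] := List.length_pos_iff.mp ((Nat.pow_pos B.succ_pos).trans_le hlen)
    obtain ⟨t₀, hmem, hmin⟩ :=
      R.exists_mem_bag_forall_dist_le r (s := {x | x ∈ l}) (List.exists_mem_of_ne_nil l hne)
    obtain ⟨l', hl', hdisj, hsplit⟩ := exists_infix_forall_not_length_le (· ∈ R.bag t₀) l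
    have hlen' : (B + 1) ^ L ≤ l'.length := by
      refine Nat.lt_succ_iff.mp (Nat.lt_of_mul_lt_mul_left (a := B + 1) ?_)
      calc (B + 1) * (B + 1) ^ L = (B + 1) ^ (L + 1) := (pow_succ' _ _).symm
        _ < l.length + 1 := Nat.lt_succ_iff.mpr hlen
        _ ≤ _ := hsplit
        _ ≤ (B + 1) * (l'.length + 1) := by
          gcongr
          exact (countP_le_ncard hnodup _).trans (hB t₀)
    obtain ⟨P, t, hP, h⟩ := ih (hchain.infix hl') (hl'.nodup hnodup) hlen'
    refine ⟨_, _, rfl, h.cons (preconnected_induce_of_isChain hchain) hmem hmin ?_ ?_⟩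
    · exact hP ▸ fun x hx ↦ hl'.subset hx
    · exact hP ▸ Set.disjoint_left.mpr (by simpa using hdisj)

lemma support_length_lt_pow_pow [Finite V] {R : TreeRep G T} (hT : T.IsTree) {b B K : ℕ}
    (hR : R.AdhesionLT (b + 1)) (hB : ∀ t, (R.bag t).ncard ≤ B)
    (hK : ∀ m, Nonempty (pathGraph m ↪g G) → m ≤ K) {u v : V} {w : G.Walk u v} (hw : w.IsPath) :
    w.support.length < (B + 1) ^ (2 * K + 1) ^ b := by
  by_contra! hlen
  obtain ⟨r⟩ := hT.connected.nonempty
  obtain ⟨P, t, -, h⟩ := exists_isDescent R r hB _ w.isChain_adj_support hw.support_nodup hlen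
  exact (h.length_lt_pow hT hR hK).false

end Length

section Numeric

lemma le_two_rpow_of_mul_logb_rpow_le {c d : ℝ} (hc : 0 < c) (hd : 0 < d) {m K : ℕ}
    (h : c * logb 2 m ^ d ≤ K) : (m : ℝ) ≤ 2 ^ (K / c : ℝ) ^ (1 / d) := by
  rcases m.eq_zero_or_pos with rfl | hm
  · rw [Nat.cast_zero]; positivity
  have hlog : 0 ≤ logb 2 m := logb_nonneg one_lt_two (by exact_mod_cast hm)
  have hle : logb 2 m ≤ (K / c : ℝ) ^ (1 / d) := by
    rw [one_div]
    exact (le_rpow_inv_iff_of_pos hlog (by positivity) hd).mpr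
      ((le_div_iff₀' hc).mpr h)
  exact (logb_le_iff_le_rpow one_lt_two (by exact_mod_cast hm)).mp hle

lemma logb_le_rpow_add_of_lt_pow_pow {c e : ℝ} (hc0 : 0 < c) (hc : c ≤ 1 / 3) (he : 0 ≤ e)
    {n B K b : ℕ} (hn : 0 < n) (hK : 0 < K) (hB : (B : ℝ) ≤ 2 ^ (K / c : ℝ) ^ e)
    (h : n < (B + 1) ^ (2 * K + 1) ^ b) : logb 2 n ≤ (K / c : ℝ) ^ ((b + 1 : ℕ) + e) := by
  set x : ℝ := K / c
  have hK1 : (1 : ℝ) ≤ K := by exact_mod_cast hK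
  have h3K : 3 * (K : ℝ) ≤ x := (le_div_iff₀ hc0).mpr (by nlinarith)
  have hx1 : 1 ≤ x ^ e := one_le_rpow (by linarith) he
  have hlogB : logb 2 (B + 1 : ℕ) ≤ 1 + x ^ e := by
    refine (logb_le_iff_le_rpow one_lt_two (by positivity)).mpr ?_
    have : (1 : ℝ) ≤ 2 ^ x ^ e := one_le_rpow one_le_two (by linarith)
    rw [rpow_one_add' zero_le_two (by positivity)]
    push_cast
    linarith
  calc logb 2 n ≤ logb 2 ((B + 1) ^ (2 * K + 1) ^ b : ℕ) :=
        logb_le_logb_of_le one_lt_two (by exact_mod_cast hn) (by exact_mod_cast h.le)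
    _ = (2 * K + 1) ^ b * logb 2 (B + 1 : ℕ) := by
        rw [Nat.cast_pow, logb_pow]; push_cast; rfl
    _ ≤ x ^ b * (x * x ^ e) := by
        gcongr
        · exact logb_nonneg one_lt_two (by exact_mod_cast B.succ_pos)
        · linarith
        · nlinarith
    _ = x ^ ((b + 1 : ℕ) + e) := by
        rw [rpow_add (by linarith), rpow_natCast, pow_succ, mul_assoc]

end Numeric

lemma HasInducedPathGE.mono {V : Type*} {G : SimpleGraph V} {x y : ℝ} (h : HasInducedPathGE G y)
    (hxy : x ≤ y) : HasInducedPathGE G x := by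
  obtain ⟨m, hm, hG⟩ := h
  exact ⟨m, hxy.trans hm, hG⟩

lemma HasHamPath.finite {V : Type*} {G : SimpleGraph V} (h : HasHamPath G) : Finite V := by
  obtain ⟨u, v, w, -, hw⟩ := h
  exact Set.finite_univ_iff.mp (w.support.finite_toSet.subset fun x _ ↦ hw x)

lemma HasHamPath.exists_isPath_support_length_eq {V : Type*} {G : SimpleGraph V}
    (h : HasHamPath G) :
    ∃ (u v : V) (w : G.Walk u v), w.IsPath ∧ w.support.length = Nat.card V := by
  classical
  have := h.finite
  have := Fintype.ofFinite V
  obtain ⟨u, v, w, hw, hmem⟩ := h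
  exact ⟨u, v, w, hw, by
    rw [(hw.isHamiltonian_of_mem hmem).length_support, Nat.card_eq_fintype_card]⟩

lemma exists_isGreatest_pathGraph_embedding {V : Type*} [Finite V] (G : SimpleGraph V) :
    ∃ K, IsGreatest {m | Nonempty (pathGraph m ↪g G)} K := by
  refine BddAbove.exists_isGreatest_of_nonempty ⟨Nat.card V, fun m ⟨f⟩ ↦ ?_⟩ ⟨0, ?_⟩
  · simpa using Nat.card_le_card_of_injective f f.injective
  · exact ⟨RelEmbedding.ofIsEmpty _ _⟩

lemma ncard_le_two_rpow_of_hasInducedPathGE_setTorso {V : Type*} {G : SimpleGraph V} {β : Set V}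
    {c d : ℝ} (hc : 0 < c) (hd : 0 < d) {K : ℕ} (hK : ∀ m, Nonempty (pathGraph m ↪g G) → m ≤ K)
    (h : HasInducedPathGE (setTorso G β) (c * logb 2 (Nat.card β) ^ d)) :
    (β.ncard : ℝ) ≤ 2 ^ (K / c : ℝ) ^ (1 / d) := by
  obtain ⟨m, hm, ⟨f⟩⟩ := h
  obtain ⟨m', hm', hind⟩ := exists_le_nonempty_pathGraph_embedding_of_setTorso f
  refine le_two_rpow_of_mul_logb_rpow_le hc hd (hm.trans ?_)
  exact_mod_cast hm'.trans (hK m' hind)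

universe u v

theorem stmt18_general (a : ℕ) (ha : 0 < a) (c d : ℝ) (hc0 : 0 < c) (hc : c ≤ 1 / 3) (hd0 : 0 < d)
    (𝒢 : ∀ {W : Type u}, SimpleGraph W → Prop)
    (hsub : ∀ {W : Type u} {H H' : SimpleGraph W}, H ≤ H' → 𝒢 H' → 𝒢 H)
    (hbound : ∀ {W : Type u} (H : SimpleGraph W), 𝒢 H → HasHamPath H →
      HasInducedPathGE H (c * logb 2 (Nat.card W) ^ d))
    {V : Type u} (G : SimpleGraph V)
    (hG : ∃ (N : Type v) (T : SimpleGraph N) (_ : T.IsTree) (R : TreeRep G T),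
      R.AdhesionLT a ∧ ∀ t, 𝒢 (R.torso t))
    (hham : HasHamPath G) :
    HasInducedPathGE G (c * logb 2 (Nat.card V) ^ (1 / (a + 1 / d))) := by
  obtain ⟨N, T, hT, R, hR, htorso⟩ := hG
  have := hham.finite
  obtain ⟨K, hKmem, hKub⟩ := exists_isGreatest_pathGraph_embedding G
  obtain ⟨u, v, w, hw, hcard⟩ := hham.exists_isPath_support_length_eq
  have hKpos : 0 < K := hKub (nonempty_pathGraph_embedding_of_length_eq_dist
    (p := (.nil : G.Walk u u)) dist_self.symm)
  have hbag (t : N) : ((R.bag t).ncard : ℝ) ≤ 2 ^ (K / c : ℝ) ^ (1 / d) := by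
    rcases (R.bag t).eq_empty_or_nonempty with hempty | hne
    · rw [hempty, Set.ncard_empty, Nat.cast_zero]; positivity
    · exact ncard_le_two_rpow_of_hasInducedPathGE_setTorso hc0 hd0 hKub
        (hbound _ (hsub (R.setTorso_bag_le_torso hT t) (htorso t)) (hham.setTorso hne))
  obtain ⟨b, rfl⟩ := Nat.exists_eq_add_of_le' ha
  have hn := support_length_lt_pow_pow hT hR (fun t ↦ Nat.le_floor (hbag t)) hKub hw
  have hlog := logb_le_rpow_add_of_lt_pow_pow hc0 hc (one_div_nonneg.mpr hd0.le)
    (List.length_pos_of_mem w.start_mem_support) hKpos (Nat.floor_le (by positivity)) hn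
  refine ⟨K, (le_div_iff₀' hc0).mp ?_, hKmem⟩
  have hlog0 : 0 ≤ logb 2 w.support.length :=
    logb_nonneg one_lt_two (by exact_mod_cast List.length_pos_of_mem w.start_mem_support)
  rw [← hcard, one_div]
  exact (rpow_inv_le_iff_of_pos hlog0 (by positivity) (by positivity)).mpr hlog

lemma logb_natCast_rpow_le_rpow (n : ℕ) {x y : ℝ} (hx : 0 < x) (hxy : x ≤ y) :
    logb 2 n ^ x ≤ logb 2 n ^ y := by
  rcases le_or_gt n 1 with hn | hn
  · have hlog : logb 2 n = 0 := by interval_cases n <;> simp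
    rw [hlog, zero_rpow hx.ne', zero_rpow (hx.trans_le hxy).ne']
  · refine rpow_le_rpow_of_exponent_le ?_ hxy
    rw [le_logb_iff_rpow_le one_lt_two (by positivity), rpow_one]
    exact_mod_cast hn

theorem stmt18 (a : ℕ) (ha : 0 < a) (c d : ℝ) (hc0 : 0 < c) (hc : c ≤ 1 / 3)
    (hd0 : 0 < d) (hd : d ≤ 1)
    (𝒢 : ∀ {W : Type}, SimpleGraph W → Prop)
    (hsub : ∀ {W W' : Type} (G : SimpleGraph W) (H : SimpleGraph W'),
      𝒢 G → (∃ f : W' ↪ W, ∀ u v : W', H.Adj u v → G.Adj (f u) (f v)) → 𝒢 H)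
    (hbound : ∀ {W : Type} [Fintype W] (H : SimpleGraph W) (n : ℕ), 𝒢 H → HasHamPath H →
      Fintype.card W = n → HasInducedPathGE H (c * Real.logb 2 n ^ d))
    {V : Type} [Fintype V] (G : SimpleGraph V) (n : ℕ)
    (hG : ∃ (N : Type) (_ : Fintype N) (T : SimpleGraph N) (_ : T.IsTree) (R : TreeRep G T),
      R.AdhesionLT a ∧ ∀ t, 𝒢 (R.torso t))
    (hham : HasHamPath G) (hn : Fintype.card V = n) :
    HasInducedPathGE G (c * Real.logb 2 n ^ ((1 : ℝ) / (4 * (a : ℝ) + 1 / d))) := by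
  have hgeneral := stmt18_general a ha c d hc0 hc hd0 𝒢
    (fun hle hH ↦ hsub _ _ hH ⟨.refl _, fun _ _ h ↦ hle h⟩)
    (fun {W} H hH hhamH ↦ by
      have := hhamH.finite
      have := Fintype.ofFinite W
      exact hbound H _ hH hhamH Nat.card_eq_fintype_card.symm)
    G (hG.imp fun N ⟨_, hN⟩ ↦ hN) hham
  rw [Nat.card_eq_fintype_card, hn] at hgeneral
  refine hgeneral.mono (mul_le_mul_of_nonneg_left (logb_natCast_rpow_le_rpow n ?_ ?_) hc0.le)
  · positivity
  · gcongr
    linarith [(Nat.cast_nonneg a : (0 : ℝ) ≤ a)]
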